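/- arXiv:2411.14538 — 2 statements merged into one kernel-verified Lean document; each statement's English description precedes it below -/
import Mathlib

section
/- Sweeping reversible automata (sRFA) recognize strictly fewer languages than one-way reversible automata with multiple initial states (MRFA): every language recognized by an sRFA is recognized by some MRFA over the same alphabet, and there exists a language (namely a* ∪ b* over the alphabet {a, b}) recognized by some MRFA but by no sRFA. -/
open scoped Classical

/-- Run a partial transition function along a word. -/
def runP {A Q : Type} (d : A → Q → Option Q) (q : Q) (w : List A) : Option Q :=
  w.foldl (fun o a => o.bind (d a)) (some q)

/-- One-way reversible finite automaton (1RFA): a partial deterministic automaton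
with a single initial state and injective transition functions. -/
structure RFA (A Q : Type) where
  start : Q
  next : A → Q → Option Q
  inj : ∀ a q q' r, next a q = some r → next a q' = some r → q = q'
  accept : Set Q

def RFA.Language {A Q : Type} (M : RFA A Q) : Set (List A) :=
  {w | ∃ qf ∈ M.accept, runP M.next M.start w = some qf}

/-- A permutation automaton (1PerFA): every transition function is a totally
defined bijection. -/
def RFA.IsPerm {A Q : Type} (M : RFA A Q) : Prop :=
  (∀ a q, (M.next a q).isSome) ∧ ∀ a r, ∃ q, M.next a q = some r

/-- One-way reversible finite automaton with multiple initial states (MRFA). -/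
structure MRFA (A Q : Type) where
  init : Set Q
  next : A → Q → Option Q
  inj : ∀ a q q' r, next a q = some r → next a q' = some r → q = q'
  accept : Set Q

def MRFA.Language {A Q : Type} (M : MRFA A Q) : Set (List A) :=
  {w | ∃ q0 ∈ M.init, ∃ qf ∈ M.accept, runP M.next q0 w = some qf}

def Rec1RFA (A : Type) (L : Set (List A)) : Prop :=
  ∃ (Q : Type) (_ : Fintype Q) (M : RFA A Q), M.Language = L

def Rec1RFA1 (A : Type) (L : Set (List A)) : Prop :=
  ∃ (Q : Type) (_ : Fintype Q) (M : RFA A Q), M.accept.ncard = 1 ∧ M.Language = L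

def Rec1PerFA (A : Type) (L : Set (List A)) : Prop :=
  ∃ (Q : Type) (_ : Fintype Q) (M : RFA A Q), M.IsPerm ∧ M.Language = L

def Rec1PerFA1 (A : Type) (L : Set (List A)) : Prop :=
  ∃ (Q : Type) (_ : Fintype Q) (M : RFA A Q),
    M.IsPerm ∧ M.accept.ncard = 1 ∧ M.Language = L

def RecMRFA (A : Type) (L : Set (List A)) : Prop :=
  ∃ (Q : Type) (_ : Fintype Q) (M : MRFA A Q), M.Language = L

/-- Sweeping reversible automaton (sRFA), given without its accepting set:
states `Qp` move rightwards, states `Qm` move leftwards; `startT` is the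
transition of the left end-marker function on the initial state, `turnL` its
restriction to `Qm`, and `turnR` is the transition function at the right
end-marker.  All transition functions are partial and injective, and the left
end-marker function is injective on the whole of `{q₀} ∪ Q₋`. -/
structure SRFA (A Qp Qm : Type) where
  start : Qp
  nextP : A → Qp → Option Qp
  nextM : A → Qm → Option Qm
  startT : Option Qp
  turnL : Qm → Option Qp
  turnR : Qp → Option Qm
  injP : ∀ a q q' r, nextP a q = some r → nextP a q' = some r → q = q'
  injM : ∀ a q q' r, nextM a q = some r → nextM a q' = some r → q = q'
  injL : ∀ q q' r, turnL q = some r → turnL q' = some r → q = q'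
  injR : ∀ q q' r, turnR q = some r → turnR q' = some r → q = q'
  startT_ne_turnL : ∀ q r, startT = some r → turnL q ≠ some r

/-- One step of a sweeping automaton on input `⊢w⊣`: a configuration is a state
together with a head position in `{0, 1, …, |w| + 1}`, where position `0` is the
left end-marker, position `i` with `1 ≤ i ≤ |w|` carries the `i`-th input
symbol, and position `|w| + 1` is the right end-marker.  The result is `none`
when the corresponding transition is undefined and the computation halts. -/
noncomputable def SRFA.step {A Qp Qm : Type} (M : SRFA A Qp Qm) (w : List A) :
    (Qp ⊕ Qm) × ℕ → Option ((Qp ⊕ Qm) × ℕ)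
  | (Sum.inl q, i) =>
      if i = 0 then
        if q = M.start then M.startT.map (fun p => (Sum.inl p, 1)) else none
      else if i = w.length + 1 then
        (M.turnR q).map (fun r => (Sum.inr r, w.length))
      else
        (w[i - 1]?.bind (fun a => M.nextP a q)).map (fun p => (Sum.inl p, i + 1))
  | (Sum.inr q, i) =>
      if i = 0 then (M.turnL q).map (fun p => (Sum.inl p, 1))
      else if i = w.length + 1 then none
      else (w[i - 1]?.bind (fun a => M.nextM a q)).map (fun r => (Sum.inr r, i - 1))

/-- The configuration reached after `n` steps of the computation on `w`,
starting in the initial state at the left end-marker (or `none` if the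
computation has halted before). -/
noncomputable def SRFA.steps {A Qp Qm : Type} (M : SRFA A Qp Qm) (w : List A) :
    ℕ → Option ((Qp ⊕ Qm) × ℕ)
  | 0 => some (Sum.inl M.start, 0)
  | n + 1 => (M.steps w n).bind (M.step w)

/-- Acceptance of an ordinary sRFA: the computation halts at the right
end-marker in an accepting state `q ∈ F ⊆ Q₊`. -/
def SRFA.AcceptsR {A Qp Qm : Type} (M : SRFA A Qp Qm) (F : Set Qp) (w : List A) : Prop :=
  ∃ n q, M.steps w n = some (Sum.inl q, w.length + 1) ∧ q ∈ F ∧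
    M.step w (Sum.inl q, w.length + 1) = none

def SRFA.LangR {A Qp Qm : Type} (M : SRFA A Qp Qm) (F : Set Qp) : Set (List A) :=
  {w | M.AcceptsR F w}

/-- Acceptance of an sRFA with acceptance at both sides: the computation halts
at either end-marker in an accepting state `c ∈ F ⊆ Q₊ ∪ Q₋`. -/
def SRFA.AcceptsB {A Qp Qm : Type} (M : SRFA A Qp Qm) (F : Set (Qp ⊕ Qm)) (w : List A) : Prop :=
  ∃ n c i, M.steps w n = some (c, i) ∧ c ∈ F ∧ (i = 0 ∨ i = w.length + 1) ∧
    M.step w (c, i) = none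

def SRFA.LangB {A Qp Qm : Type} (M : SRFA A Qp Qm) (F : Set (Qp ⊕ Qm)) : Set (List A) :=
  {w | M.AcceptsB F w}

def RecSRFA (A : Type) (L : Set (List A)) : Prop :=
  ∃ (Qp Qm : Type) (_ : Fintype Qp) (_ : Fintype Qm) (M : SRFA A Qp Qm) (F : Set Qp),
    M.LangR F = L

/-- The language `a* ∪ b*` over the two-letter alphabet `{a, b}` (with
`a = false` and `b = true`). -/
def LaStarbStar : Set (List Bool) :=
  {w | ∀ c ∈ w, c = false} ∪ {w | ∀ c ∈ w, c = true}

/-!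
Let a sweeping automaton accept a word, and record for each boundary between two tape cells the set
of states in which the computation crosses it, rightwards or leftwards. Reversibility makes the
sets on either side of a cell images of each other under a partial injection that depends only on
the symbol in the cell: right-moving states are carried forwards, left-moving states backwards. An
MRFA can therefore guess the set at the left end-marker and propagate it. Conversely, sets
propagated in this way trap the computation, and a reversible computation in a finite configuration
space whose initial configuration has no predecessor must halt, hence accepts.

A partial injection of an `n`-element set is a restriction of a permutation, so its `n!`-th iterate
is a partial identity. Hence words `u ^ n!` and `v ^ n!` are accepted by propagating constant
families `s` and `t`, and then `s ∩ t` is propagated along `u ^ n! * v ^ n!`.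
-/

open StateTransition (Reaches eval mem_eval reaches_total)

section PartialInjective

variable {α β γ : Type*}

/-- Injectivity of a partial function on its domain of definition, the reversibility condition on
transition functions. -/
def PartialInjective (f : α → Option β) : Prop :=
  ∀ ⦃x x' y⦄, f x = some y → f x' = some y → x = x'

theorem partialInjective_some : PartialInjective (some : α → Option α) := fun _ _ _ h h' =>
  Option.some.inj (h.trans h'.symm)

namespace PartialInjective

theorem bind {f : α → Option β} {g : β → Option γ} (hf : PartialInjective f)
    (hg : PartialInjective g) : PartialInjective fun x => (f x).bind g := by
  intro x x' z h h'
  obtain ⟨y, hy, hz⟩ := Option.bind_eq_some_iff.1 h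
  obtain ⟨y', hy', hz'⟩ := Option.bind_eq_some_iff.1 h'
  obtain rfl := hg hz hz'
  exact hf hy hy'

theorem partialInv_eq_some_iff {f : α → Option β} (hf : PartialInjective f) {x : α} {y : β} :
    Function.partialInv f (some y) = some x ↔ f x = some y := by
  unfold Function.partialInv
  constructor
  · intro h
    split_ifs at h with hex
    exact Option.some.inj h ▸ hex.choose_spec
  · intro h
    have hex : ∃ x, f x = some y := ⟨x, h⟩
    exact (dif_pos hex).trans (congrArg _ (hf hex.choose_spec h))

theorem exists_perm_extension [Finite α] {f : α → Option α} (hf : PartialInjective f) :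
    ∃ σ : Equiv.Perm α, ∀ ⦃x y⦄, f x = some y → σ x = y := by
  have := Fintype.ofFinite α
  have hinj : Set.InjOn (fun x => (f x).getD x) {x | ∃ y, f x = some y} := by
    rintro x ⟨y, hy⟩ x' ⟨y', hy'⟩ h
    obtain rfl : y = y' := by simpa [hy, hy'] using h
    exact hf hy hy'
  obtain ⟨g, hg⟩ := Set.MapsTo.exists_equiv_extend_of_card_eq (t := Finset.univ)
    Finset.card_univ.symm (fun _ _ => Finset.mem_coe.2 (Finset.mem_univ _)) hinj
  refine ⟨g.trans (Equiv.subtypeUnivEquiv Finset.mem_univ), fun x y hxy => ?_⟩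
  simpa [hxy] using hg x ⟨y, hxy⟩

theorem eval_dom {f : α → Option α} (hf : PartialInjective f) {x : α} (hx : ∀ y, f y ≠ some x)
    (hfin : {y | Reaches f x y}.Finite) : (eval f x).Dom := by
  suffices ∃ y, Reaches f x y ∧ f y = none by simpa only [Part.dom_iff_mem, mem_eval]
  by_contra! hne
  have htotal : ∀ y : {y | Reaches f x y}, ∃ z : {y | Reaches f x y}, f y = some z.1 := fun y => by
    obtain ⟨z, hz⟩ := Option.ne_none_iff_exists'.1 (hne y y.2)
    exact ⟨⟨z, y.2.tail hz⟩, hz⟩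
  choose g hg using htotal
  have hinj : Function.Injective g := fun y z hyz => Subtype.ext (hf (hg y) (hyz ▸ hg z))
  have := hfin.to_subtype
  obtain ⟨y, hy⟩ := Finite.surjective_of_injective hinj ⟨x, .refl⟩
  exact hx y (by rw [hg y, hy])

end PartialInjective

/-- The image of a set under a partial function, undefined as soon as the partial function is
undefined at some element of the set. -/
noncomputable def partialImage (f : α → Option β) (s : Set α) : Option (Set β) :=
  if ∀ x ∈ s, ∃ y, f x = some y then some {y | ∃ x ∈ s, f x = some y} else none

theorem partialImage_eq_some_iff {f : α → Option β} {s : Set α} {t : Set β} :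
    partialImage f s = some t ↔
      (∀ x ∈ s, ∃ y ∈ t, f x = some y) ∧ ∀ y ∈ t, ∃ x ∈ s, f x = some y := by
  unfold partialImage
  constructor
  · intro h
    split_ifs at h with hdef
    obtain rfl := Option.some.inj h
    exact ⟨fun x hx => (hdef x hx).imp fun y hy => ⟨⟨x, hx, hy⟩, hy⟩, fun _ hy => hy⟩
  · rintro ⟨hmaps, hsurj⟩
    rw [if_pos fun x hx => (hmaps x hx).imp fun _ hy => hy.2]
    refine congrArg some (Set.Subset.antisymm ?_ hsurj)
    rintro y ⟨x, hx, hxy⟩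
    obtain ⟨y', hy', hxy'⟩ := hmaps x hx
    rwa [Option.some.inj (hxy.symm.trans hxy')]

theorem partialImage_eq_some_self {f : α → Option α} {s : Set α} (h : ∀ x ∈ s, f x = some x) :
    partialImage f s = some s :=
  partialImage_eq_some_iff.2 ⟨fun x hx => ⟨x, hx, h x hx⟩, fun x hx => ⟨x, hx, h x hx⟩⟩

theorem eq_and_forall_eq_some_of_partialImage {f : α → Option α} {s t : Set α}
    (hf : ∀ ⦃x y⦄, f x = some y → x = y) (h : partialImage f s = some t) :
    s = t ∧ ∀ x ∈ s, f x = some x := by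
  obtain ⟨hmaps, hsurj⟩ := partialImage_eq_some_iff.1 h
  refine ⟨Set.Subset.antisymm (fun x hx => ?_) (fun y hy => ?_), fun x hx => ?_⟩
  · obtain ⟨y, hy, hxy⟩ := hmaps x hx
    rwa [hf hxy]
  · obtain ⟨x, hx, hxy⟩ := hsurj y hy
    rwa [← hf hxy]
  · obtain ⟨y, -, hxy⟩ := hmaps x hx
    rwa [← hf hxy] at hxy

theorem partialImage_bind (f : α → Option β) (g : β → Option γ) (s : Set α) :
    partialImage (fun x => (f x).bind g) s = (partialImage f s).bind (partialImage g) := by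
  ext u
  simp only [Option.bind_eq_some_iff, partialImage_eq_some_iff]
  constructor
  · rintro ⟨hmaps, hsurj⟩
    refine ⟨{y | ∃ x ∈ s, f x = some y}, ⟨fun x hx => ?_, fun _ hy => hy⟩, ?_, fun z hz => ?_⟩
    · obtain ⟨z, -, y, hxy, -⟩ := hmaps x hx
      exact ⟨y, ⟨x, hx, hxy⟩, hxy⟩
    · rintro y ⟨x, hx, hxy⟩
      obtain ⟨z, hz, y', hxy', hyz⟩ := hmaps x hx
      obtain rfl := Option.some.inj (hxy.symm.trans hxy')
      exact ⟨z, hz, hyz⟩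
    · obtain ⟨x, hx, y, hxy, hyz⟩ := hsurj z hz
      exact ⟨y, ⟨x, hx, hxy⟩, hyz⟩
  · rintro ⟨t, ⟨hst, hts⟩, htu, hut⟩
    constructor
    · intro x hx
      obtain ⟨y, hy, hxy⟩ := hst x hx
      obtain ⟨z, hz, hyz⟩ := htu y hy
      exact ⟨z, hz, y, hxy, hyz⟩
    · intro z hz
      obtain ⟨y, hy, hyz⟩ := hut z hz
      obtain ⟨x, hx, hxy⟩ := hts y hy
      exact ⟨x, hx, y, hxy, hyz⟩

theorem partialInjective_partialImage {f : α → Option β} (hf : PartialInjective f) :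
    PartialInjective (partialImage f) := by
  have hle {s s' t} (h : partialImage f s = some t) (h' : partialImage f s' = some t) :
      s ⊆ s' := by
    intro x hx
    obtain ⟨y, hy, hxy⟩ := (partialImage_eq_some_iff.1 h).1 x hx
    obtain ⟨x', hx', hxy'⟩ := (partialImage_eq_some_iff.1 h').2 y hy
    rwa [hf hxy hxy']
  exact fun s s' t h h' => (hle h h').antisymm (hle h' h)

end PartialInjective

section Runs

variable {A Q : Type} (d : A → Q → Option Q)

theorem foldl_bind_eq_bind_runP (o : Option Q) (w : List A) :
    w.foldl (fun o a => o.bind (d a)) o = o.bind (runP d · w) := by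
  cases o with
  | some q => rfl
  | none =>
    induction w with
    | nil => rfl
    | cons _ _ ih => exact ih

theorem runP_cons (q : Q) (a : A) (w : List A) :
    runP d q (a :: w) = (d a q).bind (runP d · w) :=
  foldl_bind_eq_bind_runP d (d a q) w

theorem runP_append (q : Q) (u v : List A) :
    runP d q (u ++ v) = (runP d q u).bind (runP d · v) := by
  rw [runP, List.foldl_append, foldl_bind_eq_bind_runP]
  rfl

theorem runP_eq_some_iff_exists_path {q t : Q} {w : List A} :
    runP d q w = some t ↔ ∃ f : ℕ → Q, f 0 = q ∧ f w.length = t ∧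
      ∀ i a, w[i]? = some a → d a (f i) = some (f (i + 1)) := by
  induction w generalizing q with
  | nil =>
    constructor
    · intro h
      exact ⟨fun _ => q, rfl, Option.some.inj h, by simp⟩
    · rintro ⟨f, rfl, rfl, -⟩
      rfl
  | cons a w ih =>
    rw [runP_cons]
    constructor
    · intro h
      obtain ⟨q', hq', h⟩ := Option.bind_eq_some_iff.1 h
      obtain ⟨f, rfl, hlast, hf⟩ := ih.1 h
      refine ⟨fun n => Nat.casesOn n q f, rfl, hlast, ?_⟩
      rintro (_ | i) b hb
      · obtain rfl : a = b := by simpa using hb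
        exact hq'
      · exact hf i b (by simpa using hb)
    · rintro ⟨f, rfl, hlast, hf⟩
      exact Option.bind_eq_some_iff.2 ⟨f 1, hf 0 a rfl,
        ih.2 ⟨fun i => f (i + 1), rfl, hlast, fun i b hb => hf (i + 1) b (by simpa using hb)⟩⟩

theorem runP_partialImage (s : Set Q) (w : List A) :
    runP (fun a => partialImage (d a)) s w = partialImage (runP d · w) s := by
  induction w generalizing s with
  | nil => exact (partialImage_eq_some_self fun _ _ => rfl).symm
  | cons a w ih => simp only [runP_cons, partialImage_bind, ih]

variable {d}

theorem partialInjective_runP (hd : ∀ a, PartialInjective (d a)) (w : List A) :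
    PartialInjective (runP d · w) := by
  induction w with
  | nil => exact partialInjective_some
  | cons a w ih => simpa only [runP_cons] using (hd a).bind ih

theorem perm_pow_apply_of_runP_flatten_replicate {σ : Equiv.Perm Q} {u : List A}
    (hσ : ∀ ⦃q t⦄, runP d q u = some t → σ q = t) {n : ℕ} {q t : Q}
    (h : runP d q (List.replicate n u).flatten = some t) : (σ ^ n) q = t := by
  induction n generalizing q with
  | zero => exact Option.some.inj h
  | succ n ih =>
    rw [List.replicate_succ, List.flatten_cons, runP_append] at h
    obtain ⟨q', hq', h⟩ := Option.bind_eq_some_iff.1 h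
    rw [pow_succ, Equiv.Perm.mul_apply, hσ hq', ih h]

theorem eq_of_runP_flatten_replicate_factorial [Finite Q] (hd : ∀ a, PartialInjective (d a))
    {u : List A} {q t : Q}
    (h : runP d q (List.replicate (Nat.card Q).factorial u).flatten = some t) : q = t := by
  obtain ⟨σ, hσ⟩ := (partialInjective_runP hd u).exists_perm_extension
  have hpow := perm_pow_apply_of_runP_flatten_replicate hσ h
  rwa [← Nat.card_perm, pow_card_eq_one', Equiv.Perm.one_apply] at hpow

end Runs

namespace SRFA

variable {A Qp Qm : Type} (M : SRFA A Qp Qm)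

section Computation

variable (w : List A)

/-- The graph of `SRFA.step`, with one constructor per kind of transition, for case analysis on a
step of the computation. -/
inductive Move : (Qp ⊕ Qm) × ℕ → (Qp ⊕ Qm) × ℕ → Prop
  | start {p} (h : M.startT = some p) : Move (.inl M.start, 0) (.inl p, 1)
  | right {i a q p} (ha : w[i]? = some a) (h : M.nextP a q = some p) :
      Move (.inl q, i + 1) (.inl p, i + 2)
  | turnR {q r} (h : M.turnR q = some r) : Move (.inl q, w.length + 1) (.inr r, w.length)
  | left {i a q r} (ha : w[i]? = some a) (h : M.nextM a q = some r) :
      Move (.inr q, i + 1) (.inr r, i)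
  | turnL {q p} (h : M.turnL q = some p) : Move (.inr q, 0) (.inl p, 1)

variable {M w} {c c' e : (Qp ⊕ Qm) × ℕ}

theorem step_eq_some_of_move (h : M.Move w c e) : M.step w c = some e := by
  cases h with
  | start h => simp [step, h]
  | turnR h => simp [step, h]
  | turnL h => simp [step, h]
  | right ha h => simp [step, ha, h, (List.getElem?_eq_some_iff.1 ha).1.ne]
  | left ha h => simp [step, ha, h, (List.getElem?_eq_some_iff.1 ha).1.ne]

theorem move_of_step_eq_some (h : M.step w c = some e) : M.Move w c e := by
  obtain ⟨q | r, _ | i⟩ := c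
  · simp only [step, if_true] at h
    split_ifs at h with hq
    obtain ⟨p, hp, rfl⟩ := Option.map_eq_some_iff.1 h
    exact hq ▸ .start hp
  · simp only [step, Nat.add_eq_zero_iff, one_ne_zero, and_false, if_false,
      Nat.add_sub_cancel] at h
    split_ifs at h with hi
    · obtain ⟨r, hr, rfl⟩ := Option.map_eq_some_iff.1 h
      exact hi ▸ .turnR hr
    · obtain ⟨p, hp, rfl⟩ := Option.map_eq_some_iff.1 h
      obtain ⟨a, ha, hp⟩ := Option.bind_eq_some_iff.1 hp
      exact .right ha hp
  · simp only [step, if_true] at h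
    obtain ⟨p, hp, rfl⟩ := Option.map_eq_some_iff.1 h
    exact .turnL hp
  · simp only [step, Nat.add_eq_zero_iff, one_ne_zero, and_false, if_false,
      Nat.add_sub_cancel] at h
    split_ifs at h
    obtain ⟨p, hp, rfl⟩ := Option.map_eq_some_iff.1 h
    obtain ⟨a, ha, hp⟩ := Option.bind_eq_some_iff.1 hp
    exact .left ha hp

theorem not_move_of_step_eq_none (h : M.step w c = none) : ¬ M.Move w c e := fun hmove => by
  simp [step_eq_some_of_move hmove] at h

theorem Move.left_unique (h : M.Move w c e) (h' : M.Move w c' e) : c = c' := by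
  have hend {a} : w[w.length]? ≠ some a := by simp
  cases h with
  | start h =>
    cases h' with
    | start => rfl
    | turnL h' => exact absurd h' (M.startT_ne_turnL _ _ h)
  | right ha h =>
    cases h' with
    | right ha' h' =>
      obtain rfl := Option.some.inj (ha.symm.trans ha')
      rw [M.injP _ _ _ _ h h']
  | turnR h =>
    cases h' with
    | turnR h' => rw [M.injR _ _ _ h h']
    | left ha' => exact absurd ha' hend
  | left ha h =>
    cases h' with
    | turnR => exact absurd ha hend
    | left ha' h' =>
      obtain rfl := Option.some.inj (ha.symm.trans ha')
      rw [M.injM _ _ _ _ h h']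
  | turnL h =>
    cases h' with
    | start h' => exact absurd h (M.startT_ne_turnL _ _ h')
    | turnL h' => rw [M.injL _ _ _ h h']

variable (M w)

theorem partialInjective_step : PartialInjective (M.step w) := fun _ _ _ h h' =>
  (move_of_step_eq_some h).left_unique (move_of_step_eq_some h')

theorem step_ne_some_start : M.step w c ≠ some (.inl M.start, 0) := fun h => by
  cases move_of_step_eq_some h

theorem reaches_iff_exists_steps :
    Reaches (M.step w) (.inl M.start, 0) c ↔ ∃ n, M.steps w n = some c := by
  constructor
  · intro h
    induction h with
    | refl => exact ⟨0, rfl⟩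
    | tail _ hstep ih =>
      obtain ⟨n, hn⟩ := ih
      exact ⟨n + 1, Option.bind_eq_some_iff.2 ⟨_, hn, hstep⟩⟩
  · rintro ⟨n, hn⟩
    induction n generalizing c with
    | zero => exact Option.some.inj hn ▸ .refl
    | succ n ih =>
      obtain ⟨b, hb, hstep⟩ := Option.bind_eq_some_iff.1 hn
      exact (ih hb).tail hstep

theorem acceptsR_iff_exists_mem_eval {F : Set Qp} : M.AcceptsR F w ↔
    ∃ q ∈ F, (.inl q, w.length + 1) ∈ eval (M.step w) (.inl M.start, 0) := by
  simp only [mem_eval, reaches_iff_exists_steps]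
  exact ⟨fun ⟨n, q, hn, hF, hhalt⟩ => ⟨q, hF, ⟨n, hn⟩, hhalt⟩,
    fun ⟨q, hF, ⟨n, hn⟩, hhalt⟩ => ⟨n, q, hn, hF, hhalt⟩⟩

end Computation

section Crossing

/-- The partial injection relating the states in which a computation crosses the two boundaries of
a cell carrying `a`: it follows right-moving states forwards and left-moving states backwards in
time. -/
noncomputable def crossNext (a : A) : Qp ⊕ Qm → Option (Qp ⊕ Qm)
  | .inl p => (M.nextP a p).map .inl
  | .inr r => (Function.partialInv (M.nextM a) (some r)).map .inr

variable {M} in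
theorem crossNext_eq_some_iff {a : A} {x y : Qp ⊕ Qm} : M.crossNext a x = some y ↔
    Sum.LiftRel (fun p p' => M.nextP a p = some p') (fun r r' => M.nextM a r' = some r) x y := by
  have hinv {r r'} : Function.partialInv (M.nextM a) (some r) = some r' ↔ M.nextM a r' = some r :=
    PartialInjective.partialInv_eq_some_iff (M.injM a)
  rcases x with p | r <;> rcases y with p' | r' <;> simp [crossNext, hinv]

theorem partialInjective_crossNext (a : A) : PartialInjective (M.crossNext a) := by
  intro x x' y h h'
  cases crossNext_eq_some_iff.1 h with
  | inl hp =>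
    cases crossNext_eq_some_iff.1 h' with
    | inl hp' => rw [M.injP _ _ _ _ hp hp']
  | inr hr =>
    cases crossNext_eq_some_iff.1 h' with
    | inr hr' => rw [Option.some.inj (hr.symm.trans hr')]

/-- The sets of states in which a computation may cross the boundary next to the left end-marker:
they contain the state entered at the start and are closed under turning at the end-marker. -/
def initialCrossings : Set (Set (Qp ⊕ Qm)) :=
  {s | (∃ p, .inl p ∈ s ∧ M.startT = some p) ∧
    ∀ r, .inr r ∈ s → ∃ p, .inl p ∈ s ∧ M.turnL r = some p}

/-- The sets of states in which an accepting computation may cross the boundary next to the right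
end-marker: every right-moving state in them turns into a member or is a halting state in `F`. -/
def acceptingCrossings (F : Set Qp) : Set (Set (Qp ⊕ Qm)) :=
  {t | ∀ p, .inl p ∈ t →
    (M.turnR p = none ∧ p ∈ F) ∨ ∃ r, .inr r ∈ t ∧ M.turnR p = some r}

variable {M} {F : Set Qp} {s t : Set (Qp ⊕ Qm)}

theorem inter_mem_initialCrossings (hs : s ∈ M.initialCrossings) (ht : t ∈ M.initialCrossings) :
    s ∩ t ∈ M.initialCrossings := by
  obtain ⟨⟨p, hp, hstart⟩, hturn⟩ := hs
  obtain ⟨⟨p', hp', hstart'⟩, hturn'⟩ := ht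
  obtain rfl := Option.some.inj (hstart.symm.trans hstart')
  refine ⟨⟨p, ⟨hp, hp'⟩, hstart⟩, fun r hr => ?_⟩
  obtain ⟨p, hp, hrp⟩ := hturn r hr.1
  obtain ⟨p', hp', hrp'⟩ := hturn' r hr.2
  obtain rfl := Option.some.inj (hrp.symm.trans hrp')
  exact ⟨p, ⟨hp, hp'⟩, hrp⟩

theorem inter_mem_acceptingCrossings (hs : s ∈ M.acceptingCrossings F)
    (ht : t ∈ M.acceptingCrossings F) : s ∩ t ∈ M.acceptingCrossings F := by
  intro p hp
  rcases hs p hp.1 with hhalt | ⟨r, hr, hpr⟩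
  · exact .inl hhalt
  rcases ht p hp.2 with hhalt | ⟨r', hr', hpr'⟩
  · exact .inl hhalt
  obtain rfl := Option.some.inj (hpr.symm.trans hpr')
  exact .inr ⟨r, ⟨hr, hr'⟩, hpr⟩

variable (M F)

/-- The automaton that guesses the set of states in which a computation of `M` crosses the leftmost
boundary and propagates it to the rightmost one. -/
noncomputable def crossMRFA : MRFA A (Set (Qp ⊕ Qm)) where
  init := M.initialCrossings
  next a := partialImage (M.crossNext a)
  inj a _ _ _ h h' := partialInjective_partialImage (M.partialInjective_crossNext a) h h'
  accept := M.acceptingCrossings F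

/-- A family of sets of states that is locally consistent with being the family of crossing sets of
an accepting computation on `w`; `g i` belongs to the boundary between the cells `i` and
`i + 1`. -/
structure IsCrossingFamily (w : List A) (g : ℕ → Set (Qp ⊕ Qm)) : Prop where
  zero_mem : g 0 ∈ M.initialCrossings
  length_mem : g w.length ∈ M.acceptingCrossings F
  image_eq : ∀ i a, w[i]? = some a → partialImage (M.crossNext a) (g i) = some (g (i + 1))

theorem mem_crossMRFA_language_iff_exists_isCrossingFamily {w : List A} :
    w ∈ (M.crossMRFA F).Language ↔ ∃ g, M.IsCrossingFamily F w g := by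
  constructor
  · rintro ⟨s, hs, t, ht, hrun⟩
    obtain ⟨g, rfl, rfl, hg⟩ := (runP_eq_some_iff_exists_path _).1 hrun
    exact ⟨g, hs, ht, hg⟩
  · rintro ⟨g, hs, ht, hg⟩
    exact ⟨g 0, hs, g w.length, ht, (runP_eq_some_iff_exists_path _).2 ⟨g, rfl, rfl, hg⟩⟩

theorem mem_crossMRFA_language_iff_partialImage {w : List A} :
    w ∈ (M.crossMRFA F).Language ↔ ∃ s ∈ M.initialCrossings, ∃ t ∈ M.acceptingCrossings F,
      partialImage (runP M.crossNext · w) s = some t := by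
  simp only [← runP_partialImage]
  rfl

end Crossing

section Completeness

variable {F : Set Qp} {w : List A}

/-- The states in which the computation on `w` crosses the boundary between the cells `i` and
`i + 1`: a right-moving state is then over cell `i + 1`, a left-moving one over cell `i`. -/
def crossingSet (w : List A) (i : ℕ) : Set (Qp ⊕ Qm) :=
  {x | Reaches (M.step w) (.inl M.start, 0) (x, Sum.elim (fun _ => i + 1) (fun _ => i) x)}

variable {M}

theorem eq_or_exists_move_of_reaches {c₀ c e : (Qp ⊕ Qm) × ℕ} (he : e ∈ eval (M.step w) c₀)
    (hc : Reaches (M.step w) c₀ c) :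
    c = e ∨ ∃ c', M.Move w c c' ∧ Reaches (M.step w) c₀ c' := by
  obtain ⟨he, hhalt⟩ := mem_eval.1 he
  have hce : Reaches (M.step w) c e := by
    rcases reaches_total hc he with hce | hec
    · exact hce
    · rcases hec.cases_head with rfl | ⟨c', hstep, -⟩
      · exact .refl
      · simp [hhalt] at hstep
  rcases hce.cases_head with rfl | ⟨c', hstep, -⟩
  · exact .inl rfl
  · exact .inr ⟨c', move_of_step_eq_some hstep, hc.tail hstep⟩

theorem exists_move_to_of_reaches {c₀ c : (Qp ⊕ Qm) × ℕ} (hc : Reaches (M.step w) c₀ c)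
    (hne : c ≠ c₀) : ∃ b, Reaches (M.step w) c₀ b ∧ M.Move w b c := by
  obtain ⟨b, hb, hstep⟩ := hc.cases_tail.resolve_left hne
  exact ⟨b, hb, move_of_step_eq_some hstep⟩

variable {qf : Qp}

theorem crossingSet_zero_mem_initialCrossings
    (hqf : (.inl qf, w.length + 1) ∈ eval (M.step w) (.inl M.start, 0)) :
    M.crossingSet w 0 ∈ M.initialCrossings := by
  constructor
  · obtain ⟨c, hmove, hc⟩ := (eq_or_exists_move_of_reaches hqf .refl).resolve_left (by simp)
    cases hmove with
    | start h => exact ⟨_, hc, h⟩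
  · intro r hr
    obtain ⟨c, hmove, hc⟩ := (eq_or_exists_move_of_reaches hqf hr).resolve_left (by simp)
    cases hmove with
    | turnL h => exact ⟨_, hc, h⟩

theorem crossingSet_length_mem_acceptingCrossings
    (hqf : (.inl qf, w.length + 1) ∈ eval (M.step w) (.inl M.start, 0))
    (hF : qf ∈ F) :
    M.crossingSet w w.length ∈ M.acceptingCrossings F := by
  intro p hp
  rcases eq_or_exists_move_of_reaches hqf hp with heq | ⟨c, hmove, hc⟩
  · obtain rfl : p = qf := by simpa using heq
    exact .inl ⟨Option.eq_none_iff_forall_ne_some.2 fun r hr =>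
      not_move_of_step_eq_none (mem_eval.1 hqf).2 (.turnR hr), hF⟩
  · cases hmove with
    | right ha => simp at ha
    | turnR h => exact .inr ⟨_, hc, h⟩

theorem partialImage_crossNext_crossingSet
    (hqf : (.inl qf, w.length + 1) ∈ eval (M.step w) (.inl M.start, 0))
    {i : ℕ} {a : A} (ha : w[i]? = some a) :
    partialImage (M.crossNext a) (M.crossingSet w i) = some (M.crossingSet w (i + 1)) := by
  have hi : i ≠ w.length := (List.getElem?_eq_some_iff.1 ha).1.ne
  simp only [partialImage_eq_some_iff, crossNext_eq_some_iff]
  constructor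
  · rintro (p | r) hx
    · obtain ⟨c, hmove, hc⟩ :=
        (eq_or_exists_move_of_reaches hqf hx).resolve_left (by simp [hi])
      cases hmove with
      | right ha' h =>
        obtain rfl := Option.some.inj (ha.symm.trans ha')
        exact ⟨_, hc, .inl h⟩
      | turnR => exact absurd rfl hi
    · obtain ⟨b, hb, hmove⟩ := exists_move_to_of_reaches hx (by simp)
      cases hmove with
      | left ha' h =>
        obtain rfl := Option.some.inj (ha.symm.trans ha')
        exact ⟨_, hb, .inr h⟩
      | turnR => exact absurd rfl hi
  · rintro (p | r) hy
    · obtain ⟨b, hb, hmove⟩ := exists_move_to_of_reaches hy (by simp)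
      cases hmove with
      | right ha' h =>
        obtain rfl := Option.some.inj (ha.symm.trans ha')
        exact ⟨_, hb, .inl h⟩
    · obtain ⟨c, hmove, hc⟩ := (eq_or_exists_move_of_reaches hqf hy).resolve_left (by simp)
      cases hmove with
      | left ha' h =>
        obtain rfl := Option.some.inj (ha.symm.trans ha')
        exact ⟨_, hc, .inr h⟩

theorem AcceptsR.isCrossingFamily_crossingSet (h : M.AcceptsR F w) :
    M.IsCrossingFamily F w (M.crossingSet w) := by
  obtain ⟨qf, hF, hqf⟩ := (M.acceptsR_iff_exists_mem_eval w).1 h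
  exact ⟨crossingSet_zero_mem_initialCrossings hqf,
    crossingSet_length_mem_acceptingCrossings hqf hF,
    fun _ _ ha => partialImage_crossNext_crossingSet hqf ha⟩

end Completeness

section Soundness

/-- The configurations in which `M` has just crossed a boundary in a state of the family `g`,
together with the initial one. -/
def crossingConfigs (w : List A) (g : ℕ → Set (Qp ⊕ Qm)) : Set ((Qp ⊕ Qm) × ℕ)
  | (.inl q, 0) => q = M.start
  | (.inl q, i + 1) => i ≤ w.length ∧ .inl q ∈ g i
  | (.inr r, i) => i ≤ w.length ∧ .inr r ∈ g i

variable {M} {F : Set Qp} {w : List A} {g : ℕ → Set (Qp ⊕ Qm)} {c c' : (Qp ⊕ Qm) × ℕ}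

theorem finite_crossingConfigs [Finite Qp] [Finite Qm] : (M.crossingConfigs w g).Finite := by
  refine (Set.finite_univ.prod (Set.finite_Iic (w.length + 1))).subset ?_
  rintro ⟨q | r, _ | i⟩ h
  · simp
  · simpa using h.1
  · simp
  · simpa using h.1.trans (Nat.le_succ _)

namespace IsCrossingFamily

theorem mem_crossingConfigs_of_move (hg : M.IsCrossingFamily F w g)
    (hc : c ∈ M.crossingConfigs w g) (hmove : M.Move w c c') : c' ∈ M.crossingConfigs w g := by
  cases hmove with
  | start h =>
    obtain ⟨p, hp, hstart⟩ := hg.zero_mem.1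
    obtain rfl := Option.some.inj (h.symm.trans hstart)
    exact ⟨Nat.zero_le _, hp⟩
  | right ha h =>
    obtain ⟨y, hy, hxy⟩ := (partialImage_eq_some_iff.1 (hg.image_eq _ _ ha)).1 _ hc.2
    cases crossNext_eq_some_iff.1 hxy with
    | inl h' =>
      obtain rfl := Option.some.inj (h.symm.trans h')
      exact ⟨(List.getElem?_eq_some_iff.1 ha).1, hy⟩
  | turnR h =>
    rcases hg.length_mem _ hc.2 with ⟨hnone, -⟩ | ⟨r, hr, h'⟩
    · cases h.symm.trans hnone
    · obtain rfl := Option.some.inj (h.symm.trans h')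
      exact ⟨le_rfl, hr⟩
  | left ha h =>
    obtain ⟨x, hx, hxy⟩ := (partialImage_eq_some_iff.1 (hg.image_eq _ _ ha)).2 _ hc.2
    cases crossNext_eq_some_iff.1 hxy with
    | inr h' =>
      obtain rfl := Option.some.inj (h.symm.trans h')
      exact ⟨(List.getElem?_eq_some_iff.1 ha).1.le, hx⟩
  | turnL h =>
    obtain ⟨p, hp, h'⟩ := hg.zero_mem.2 _ hc.2
    obtain rfl := Option.some.inj (h.symm.trans h')
    exact ⟨Nat.zero_le _, hp⟩

theorem exists_accepting_of_step_eq_none (hg : M.IsCrossingFamily F w g)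
    (hc : c ∈ M.crossingConfigs w g) (hhalt : M.step w c = none) :
    ∃ q ∈ F, c = (.inl q, w.length + 1) := by
  by_contra! hne
  suffices ∃ e, M.Move w c e from this.elim fun _ => not_move_of_step_eq_none hhalt
  have hcell {i : ℕ} (hi : i < w.length) := partialImage_eq_some_iff.1
    (hg.image_eq i w[i] (List.getElem?_eq_getElem hi))
  obtain ⟨q | r, _ | i⟩ := c
  · obtain rfl : q = M.start := hc
    obtain ⟨p, -, h⟩ := hg.zero_mem.1
    exact ⟨_, .start h⟩
  · obtain ⟨hi, hq⟩ := hc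
    rcases hi.eq_or_lt with rfl | hlt
    · rcases hg.length_mem q hq with ⟨-, hF⟩ | ⟨r, -, h⟩
      · exact absurd rfl (hne q hF)
      · exact ⟨_, .turnR h⟩
    · obtain ⟨y, -, hxy⟩ := (hcell hlt).1 _ hq
      cases crossNext_eq_some_iff.1 hxy with
      | inl h => exact ⟨_, .right (List.getElem?_eq_getElem hlt) h⟩
  · obtain ⟨p, -, h⟩ := hg.zero_mem.2 r hc.2
    exact ⟨_, .turnL h⟩
  · obtain ⟨hlt, hr⟩ := hc
    obtain ⟨x, -, hxy⟩ := (hcell hlt).2 _ hr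
    cases crossNext_eq_some_iff.1 hxy with
    | inr h => exact ⟨_, .left (List.getElem?_eq_getElem hlt) h⟩

theorem mem_crossingConfigs_of_reaches (hg : M.IsCrossingFamily F w g)
    (hc : Reaches (M.step w) (.inl M.start, 0) c) : c ∈ M.crossingConfigs w g := by
  induction hc with
  | refl => exact (rfl : M.start = M.start)
  | tail _ hstep ih => exact hg.mem_crossingConfigs_of_move ih (move_of_step_eq_some hstep)

theorem acceptsR [Finite Qp] [Finite Qm] (hg : M.IsCrossingFamily F w g) : M.AcceptsR F w := by
  have hmem {c} := hg.mem_crossingConfigs_of_reaches (c := c)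
  have hdom := (M.partialInjective_step w).eval_dom (fun _ => M.step_ne_some_start w)
    (finite_crossingConfigs.subset fun _ => hmem)
  obtain ⟨c, hc⟩ := Part.dom_iff_mem.1 hdom
  obtain ⟨hreach, hhalt⟩ := mem_eval.1 hc
  obtain ⟨q, hF, rfl⟩ := hg.exists_accepting_of_step_eq_none (hmem hreach) hhalt
  exact (M.acceptsR_iff_exists_mem_eval w).2 ⟨q, hF, hc⟩

end IsCrossingFamily

end Soundness

variable [Finite Qp] [Finite Qm] (F : Set Qp)

theorem crossMRFA_language : (M.crossMRFA F).Language = M.LangR F := by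
  ext w
  rw [mem_crossMRFA_language_iff_exists_isCrossingFamily]
  exact ⟨fun ⟨_, hg⟩ => hg.acceptsR, fun h => ⟨_, h.isCrossingFamily_crossingSet⟩⟩

theorem exists_pow_append_pow_mem_langR : ∃ N > 0, ∀ u v : List A,
    (List.replicate N u).flatten ∈ M.LangR F → (List.replicate N v).flatten ∈ M.LangR F →
      (List.replicate N u).flatten ++ (List.replicate N v).flatten ∈ M.LangR F := by
  refine ⟨(Nat.card (Qp ⊕ Qm)).factorial, Nat.factorial_pos _, fun u v hu hv => ?_⟩
  rw [← crossMRFA_language, mem_crossMRFA_language_iff_partialImage] at hu hv ⊢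
  obtain ⟨s, hs, s', hs', hss'⟩ := hu
  obtain ⟨t, ht, t', ht', htt'⟩ := hv
  obtain ⟨rfl, hfix⟩ := eq_and_forall_eq_some_of_partialImage
    (fun _ _ => eq_of_runP_flatten_replicate_factorial M.partialInjective_crossNext) hss'
  obtain ⟨rfl, hfix'⟩ := eq_and_forall_eq_some_of_partialImage
    (fun _ _ => eq_of_runP_flatten_replicate_factorial M.partialInjective_crossNext) htt'
  have hinter : ∀ x ∈ s ∩ t, runP M.crossNext x
      ((List.replicate _ u).flatten ++ (List.replicate _ v).flatten) = some x := fun x hx => by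
    rw [runP_append, hfix x hx.1, Option.bind_some, hfix' x hx.2]
  exact ⟨s ∩ t, inter_mem_initialCrossings hs ht, s ∩ t, inter_mem_acceptingCrossings hs' ht',
    partialImage_eq_some_self hinter⟩

end SRFA

section Loop

/-- The automaton with one initial accepting state per letter, which loops on that letter only. -/
noncomputable def loopMRFA (A : Type) : MRFA A A where
  init := Set.univ
  next a q := if q = a then some q else none
  inj a q q' r h h' := by
    split_ifs at h h' with e e'
    exact e.trans e'.symm
  accept := Set.univ

theorem runP_loopMRFA {A : Type} {q t : A} {w : List A} :
    runP (loopMRFA A).next q w = some t ↔ q = t ∧ ∀ c ∈ w, c = q := by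
  induction w with
  | nil => simp [runP]
  | cons a w ih =>
    rw [runP_cons]
    by_cases h : q = a
    · subst h
      simpa [loopMRFA] using ih
    · simp [loopMRFA, h, Ne.symm h]

theorem loopMRFA_language (A : Type) : (loopMRFA A).Language = {w | ∃ q, ∀ c ∈ w, c = q} := by
  ext w
  simp only [MRFA.Language, runP_loopMRFA]
  simp [loopMRFA]

theorem LaStarbStar_eq_setOf_forall_eq : LaStarbStar = {w | ∃ q, ∀ c ∈ w, c = q} := by
  ext w
  simp [LaStarbStar]

end Loop

/-- sRFA recognize strictly fewer languages than MRFA: every sRFA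
language is an MRFA language over the same alphabet, and `a* ∪ b*` is an MRFA
language which is not an sRFA language. -/
theorem stmt12 :
    (∀ (A : Type) (L : Set (List A)), RecSRFA A L → RecMRFA A L) ∧
    RecMRFA Bool LaStarbStar ∧ ¬ RecSRFA Bool LaStarbStar := by
  refine ⟨?_, ⟨Bool, inferInstance, loopMRFA Bool, ?_⟩, ?_⟩
  · rintro A _ ⟨Qp, Qm, _, _, M, F, rfl⟩
    exact ⟨Set (Qp ⊕ Qm), inferInstance, M.crossMRFA F, M.crossMRFA_language F⟩
  · rw [loopMRFA_language, LaStarbStar_eq_setOf_forall_eq]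
  · rintro ⟨Qp, Qm, _, _, M, F, hL⟩
    obtain ⟨N, hN, hmul⟩ := M.exists_pow_append_pow_mem_langR F
    simp only [hL] at hmul
    have hab := hmul [false] [true] (by simp [LaStarbStar]) (by simp [LaStarbStar])
    simp [LaStarbStar, hN.ne'] at hab
end

section
/- Over a one-letter alphabet {a}, sweeping reversible automata (sRFA) and one-way reversible automata with multiple initial states (MRFA) recognize exactly the same family of languages: a unary language is recognized by some sRFA if and only if it is recognized by some MRFA. -/
open scoped Classical

/-!
Over a one-letter alphabet, a sweep across a word of length `n` applies a partial injection of a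
finite set `n` times. A run of at least as many steps as there are states repeats a state, and
injectivity pulls the repetition back to the first state, which therefore lies on a cycle of length
at most `N`, for any `N` bounding the number of states. Hence a run over a word of length at least
`N` may be replaced by a run over any word whose length is congruent modulo `N !`, even a shorter
one. This applies to all the sweeps of an accepting computation at once, so the lengths of accepted
words form the union of a finite and a periodic set, for both kinds of automata.

Conversely, such a union is recognized by a cycle, which tests the residue of the length, next to a
path, which tests the length itself. An MRFA starts on both. An sRFA first runs around the cycle;
if the residue is not accepted, the leftward sweep undoes the run, returning to `0` whatever the
length was, and the next rightward sweep follows the path.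
-/

/-- A partial function, with `none` for undefined values, is injective where it is defined: the
condition imposed on each transition function of a reversible automaton. -/
def IsPartialInjection {α β : Type*} (f : α → Option β) : Prop :=
  ∀ a b c, f a = some c → f b = some c → a = b

section PartialIteration

open Function

variable {α : Type*} {f : α → Option α}

theorem exists_iterate_bind_eq_some_of_le {m n : ℕ} (hmn : m ≤ n) {x : Option α} {c : α}
    (h : (Option.bind · f)^[n] x = some c) : ∃ b, (Option.bind · f)^[m] x = some b := by
  refine Option.ne_none_iff_exists'.mp fun hnone => ?_
  have hfixed : (none : Option α).bind f = none := rfl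
  rw [← Nat.sub_add_cancel hmn, iterate_add_apply, hnone, iterate_fixed hfixed] at h
  cases h

namespace IsPartialInjection

theorem eq_of_iterate_bind_eq_some (hf : IsPartialInjection f) (n : ℕ) {x y : Option α} {c : α}
    (hx : (Option.bind · f)^[n] x = some c) (hy : (Option.bind · f)^[n] y = some c) : x = y := by
  induction n generalizing c with
  | zero => exact hx.trans hy.symm
  | succ n ih =>
    rw [iterate_succ_apply', Option.bind_eq_some_iff] at hx hy
    obtain ⟨a, hxa, ha⟩ := hx
    obtain ⟨b, hyb, hb⟩ := hy
    obtain rfl := hf a b c ha hb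
    exact ih hxa hyb

theorem exists_isPeriodicPt [Fintype α] (hf : IsPartialInjection f) {n : ℕ}
    (hn : Fintype.card α ≤ n) {a c : α} (h : (Option.bind · f)^[n] (some a) = some c) :
    ∃ d, 0 < d ∧ d ≤ Fintype.card α ∧ IsPeriodicPt (Option.bind · f) d (some a) := by
  have hdef (i : Fin (Fintype.card α + 1)) : ∃ b, (Option.bind · f)^[i] (some a) = some b :=
    exists_iterate_bind_eq_some_of_le (by omega) h
  choose s hs using hdef
  obtain ⟨i, j, hij, hsij⟩ : ∃ i j, i < j ∧ s i = s j := by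
    obtain ⟨i, j, hne, hsij⟩ := Fintype.exists_ne_map_eq_of_card_lt s (by simp)
    exact hne.lt_or_gt.elim (⟨i, j, ·, hsij⟩) (⟨j, i, ·, hsij.symm⟩)
  have hlt : (i : ℕ) < j := hij
  refine ⟨j - i, by omega, by omega, hf.eq_of_iterate_bind_eq_some i ?_ (hs i)⟩
  rw [← iterate_add_apply, Nat.add_sub_cancel' hlt.le, hs, hsij]

theorem iterate_bind_eq_some_of_modEq [Fintype α] (hf : IsPartialInjection f) {N m n : ℕ}
    (hN : Fintype.card α ≤ N) (hm : N ≤ m) (hmn : m ≡ n [MOD N.factorial]) {a c : α}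
    (h : (Option.bind · f)^[m] (some a) = some c) :
    (Option.bind · f)^[n] (some a) = some c := by
  obtain ⟨d, hd, hdα, hper⟩ := hf.exists_isPeriodicPt (hN.trans hm) h
  have hmod : m % d = n % d := hmn.of_dvd (Nat.dvd_factorial hd (hdα.trans hN))
  rw [← hper.iterate_mod_apply, ← hmod, hper.iterate_mod_apply, h]

end IsPartialInjection

end PartialIteration

section Runs

variable {A Q : Type}

theorem runP_concat (d : A → Q → Option Q) (q : Q) (w : List A) (a : A) :
    runP d q (w ++ [a]) = (runP d q w).bind (d a) := by
  simp [runP]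

theorem runP_const (f : Q → Option Q) (q : Q) (w : List A) :
    runP (fun _ => f) q w = (Option.bind · f)^[w.length] (some q) :=
  List.foldl_const ..

theorem runP_eq_some_of_length_modEq [Unique A] [Fintype Q] {d : A → Q → Option Q}
    (hd : ∀ a, IsPartialInjection (d a)) {N : ℕ} (hN : Fintype.card Q ≤ N) {u v : List A}
    (hu : N ≤ u.length) (huv : u.length ≡ v.length [MOD N.factorial]) {q r : Q}
    (h : runP d q u = some r) : runP d q v = some r := by
  have hconst : d = fun _ => d default := funext fun a => congrArg d (Unique.eq_default a)
  rw [hconst, runP_const] at h ⊢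
  exact (hd default).iterate_bind_eq_some_of_modEq hN hu huv h

end Runs

section FiniteUnionPeriodic

/-- A set of naturals is the union of a finite set and a purely periodic one; these are the sets of
word lengths that characterize the unary languages of both MRFA and sRFA. -/
def IsFiniteUnionPeriodic (S : Set ℕ) : Prop :=
  ∃ (F P : Set ℕ) (p : ℕ), F.Finite ∧ 0 < p ∧ Function.Periodic (· ∈ P) p ∧ F ∪ P = S

theorem isFiniteUnionPeriodic_of_modEq {S : Set ℕ} (N : ℕ) {p : ℕ} (hp : 0 < p)
    (h : ∀ m ∈ S, N ≤ m → ∀ n, m ≡ n [MOD p] → n ∈ S) : IsFiniteUnionPeriodic S := by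
  refine ⟨{n ∈ S | n < N}, {n | ∃ m ∈ S, N ≤ m ∧ m ≡ n [MOD p]}, p,
    (Set.finite_lt_nat N).subset fun n hn => hn.2, hp, fun n => ?_, ?_⟩
  · simp [Nat.ModEq]
  · ext n
    constructor
    · rintro (⟨hn, -⟩ | ⟨m, hm, hNm, hmn⟩)
      · exact hn
      · exact h m hm hNm n hmn
    · intro hn
      exact (lt_or_ge n N).imp (⟨hn, ·⟩) (⟨n, hn, ·, rfl⟩)

theorem isFiniteUnionPeriodic_image_length {A : Type*} [Nonempty A] {L : Set (List A)} (N : ℕ)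
    {p : ℕ} (hp : 0 < p) (h : ∀ u ∈ L, N ≤ u.length → ∀ v, u.length ≡ v.length [MOD p] → v ∈ L) :
    IsFiniteUnionPeriodic (List.length '' L) := by
  refine isFiniteUnionPeriodic_of_modEq N hp ?_
  rintro _ ⟨u, hu, rfl⟩ hN n hn
  let v := List.replicate n (Classical.arbitrary A)
  have hv : v.length = n := List.length_replicate
  exact ⟨v, h u hu hN v (hv.symm ▸ hn), hv⟩

end FiniteUnionPeriodic

namespace SRFA

variable {A Qp Qm : Type} {M : SRFA A Qp Qm} {w : List A}

/-- The configuration occurs in the computation of the automaton on `w`. -/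
def Reaches (M : SRFA A Qp Qm) (w : List A) (c : (Qp ⊕ Qm) × ℕ) : Prop :=
  ∃ k, M.steps w k = some c

theorem Reaches.step {c c' : (Qp ⊕ Qm) × ℕ} (hc : M.Reaches w c) (h : M.step w c = some c') :
    M.Reaches w c' :=
  hc.imp' (· + 1) fun k hk => by rw [steps, hk, Option.bind_some, h]

theorem step_start (M : SRFA A Qp Qm) (w : List A) :
    M.step w (Sum.inl M.start, 0) = M.startT.map fun p => (Sum.inl p, 1) := by
  simp [step]

theorem step_inl (M : SRFA A Qp Qm) {i : ℕ} (hi : i < w.length) (q : Qp) :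
    M.step w (Sum.inl q, i + 1) = (M.nextP w[i] q).map fun p => (Sum.inl p, i + 2) := by
  simp [step, hi, hi.ne]

theorem step_inr (M : SRFA A Qp Qm) {i : ℕ} (hi : i < w.length) (q : Qm) :
    M.step w (Sum.inr q, i + 1) = (M.nextM w[i] q).map fun r => (Sum.inr r, i) := by
  simp [step, hi, hi.ne]

theorem step_turnR (M : SRFA A Qp Qm) (w : List A) (q : Qp) :
    M.step w (Sum.inl q, w.length + 1) = (M.turnR q).map fun r => (Sum.inr r, w.length) := by
  simp [step]

theorem step_turnL (M : SRFA A Qp Qm) (w : List A) (q : Qm) :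
    M.step w (Sum.inr q, 0) = (M.turnL q).map fun p => (Sum.inl p, 1) := by
  simp [step]

theorem Reaches.sweepRight {p q : Qp} (hp : M.Reaches w (Sum.inl p, 1)) {i : ℕ}
    (hi : i ≤ w.length) (h : runP M.nextP p (w.take i) = some q) :
    M.Reaches w (Sum.inl q, i + 1) := by
  induction i generalizing q with
  | zero => exact Option.some.inj h ▸ hp
  | succ i ih =>
    rw [← List.take_concat_get' w i hi, runP_concat, Option.bind_eq_some_iff] at h
    obtain ⟨t, ht, htq⟩ := h
    exact (ih (by omega) ht).step (by rw [M.step_inl hi, htq, Option.map_some])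

theorem Reaches.sweepLeft {r s : Qm} (hr : M.Reaches w (Sum.inr r, w.length)) {i : ℕ}
    (hi : i ≤ w.length) (h : runP M.nextM r (w.drop i).reverse = some s) :
    M.Reaches w (Sum.inr s, i) := by
  induction hi using Nat.decreasingInduction generalizing s with
  | self =>
    rw [List.drop_length] at h
    exact Option.some.inj h ▸ hr
  | of_succ i hi ih =>
    rw [List.drop_eq_getElem_cons hi, List.reverse_cons, runP_concat,
      Option.bind_eq_some_iff] at h
    obtain ⟨t, ht, hts⟩ := h
    exact (ih ht).step (by rw [M.step_inr hi, hts, Option.map_some])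

/-- The states in which the computation on `w` begins a sweep, just after leaving an end-marker:
`Sum.inl p` for rightward sweeps and `Sum.inr r` for leftward ones. -/
inductive SweepStart (M : SRFA A Qp Qm) (w : List A) : Qp ⊕ Qm → Prop
  | init {p : Qp} : M.startT = some p → M.SweepStart w (Sum.inl p)
  | turnR {p q : Qp} {r : Qm} : M.SweepStart w (Sum.inl p) → runP M.nextP p w = some q →
      M.turnR q = some r → M.SweepStart w (Sum.inr r)
  | turnL {r s : Qm} {p : Qp} : M.SweepStart w (Sum.inr r) → runP M.nextM r w.reverse = some s →
      M.turnL s = some p → M.SweepStart w (Sum.inl p)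

theorem SweepStart.reaches {c : Qp ⊕ Qm} (h : M.SweepStart w c) :
    M.Reaches w (c, c.elim (fun _ => 1) fun _ => w.length) := by
  induction h with
  | init h =>
    exact Reaches.step ⟨0, rfl⟩ (by rw [step_start, h, Option.map_some, Sum.elim_inl])
  | turnR _ hq hr ih =>
    refine (ih.sweepRight le_rfl (w.take_length.symm ▸ hq)).step ?_
    rw [step_turnR, hr, Option.map_some, Sum.elim_inr]
  | turnL _ hs hp ih =>
    refine (ih.sweepLeft (Nat.zero_le _) hs).step ?_
    rw [step_turnL, hp, Option.map_some, Sum.elim_inl]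

/-- The configuration lies on a sweep begun in a state satisfying `SweepStart`. This is the
invariant of the computation on `w`; it says nothing about rightward states at the left end-marker,
where only the initial state can move. -/
def OnSweep (M : SRFA A Qp Qm) (w : List A) : (Qp ⊕ Qm) × ℕ → Prop
  | (Sum.inl _, 0) => True
  | (Sum.inl q, i + 1) =>
      i ≤ w.length ∧ ∃ p, M.SweepStart w (Sum.inl p) ∧ runP M.nextP p (w.take i) = some q
  | (Sum.inr s, i) =>
      i ≤ w.length ∧ ∃ r, M.SweepStart w (Sum.inr r) ∧
        runP M.nextM r (w.drop i).reverse = some s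

theorem SweepStart.onSweep {c : Qp ⊕ Qm} (h : M.SweepStart w c) :
    M.OnSweep w (c, c.elim (fun _ => 1) fun _ => w.length) := by
  cases c with
  | inl p => exact ⟨Nat.zero_le _, p, h, rfl⟩
  | inr r => exact ⟨le_rfl, r, h, by rw [Sum.elim_inr, List.drop_length]; rfl⟩

theorem OnSweep.step_inl {q : Qp} {i : ℕ} {c : (Qp ⊕ Qm) × ℕ}
    (hq : M.OnSweep w (Sum.inl q, i)) (h : M.step w (Sum.inl q, i) = some c) :
    M.OnSweep w c := by
  cases i with
  | zero =>
    obtain rfl : q = M.start := by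
      by_contra hne
      simp [step, hne] at h
    rw [step_start, Option.map_eq_some_iff] at h
    obtain ⟨p, hp, rfl⟩ := h
    exact (SweepStart.init hp).onSweep
  | succ i =>
    obtain ⟨hi, p, hp, hpq⟩ := hq
    rcases hi.lt_or_eq with hlt | rfl
    · rw [M.step_inl hlt, Option.map_eq_some_iff] at h
      obtain ⟨t, ht, rfl⟩ := h
      refine ⟨hlt, p, hp, ?_⟩
      rw [← List.take_concat_get' w i hlt, runP_concat, hpq, Option.bind_some, ht]
    · rw [step_turnR, Option.map_eq_some_iff] at h
      obtain ⟨r, hr, rfl⟩ := h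
      rw [List.take_length] at hpq
      exact (hp.turnR hpq hr).onSweep

theorem OnSweep.step_inr {s : Qm} {i : ℕ} {c : (Qp ⊕ Qm) × ℕ}
    (hs : M.OnSweep w (Sum.inr s, i)) (h : M.step w (Sum.inr s, i) = some c) :
    M.OnSweep w c := by
  obtain ⟨hi, r, hr, hrs⟩ := hs
  cases i with
  | zero =>
    rw [step_turnL, Option.map_eq_some_iff] at h
    obtain ⟨p, hp, rfl⟩ := h
    exact (hr.turnL hrs hp).onSweep
  | succ i =>
    rw [M.step_inr hi, Option.map_eq_some_iff] at h
    obtain ⟨t, ht, rfl⟩ := h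
    refine ⟨Nat.le_of_succ_le hi, r, hr, ?_⟩
    rw [List.drop_eq_getElem_cons hi, List.reverse_cons, runP_concat, hrs, Option.bind_some, ht]

theorem Reaches.onSweep {c : (Qp ⊕ Qm) × ℕ} (hc : M.Reaches w c) : M.OnSweep w c := by
  obtain ⟨k, hk⟩ := hc
  induction k generalizing c with
  | zero =>
    obtain rfl := Option.some.inj hk
    trivial
  | succ k ih =>
    rw [steps, Option.bind_eq_some_iff] at hk
    obtain ⟨⟨q | s, i⟩, hd, hdc⟩ := hk
    · exact (ih hd).step_inl hdc
    · exact (ih hd).step_inr hdc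

theorem acceptsR_iff {F : Set Qp} :
    M.AcceptsR F w ↔ ∃ p q, M.SweepStart w (Sum.inl p) ∧ runP M.nextP p w = some q ∧ q ∈ F ∧
      M.turnR q = none := by
  constructor
  · rintro ⟨k, q, hk, hqF, hhalt⟩
    obtain ⟨-, p, hp, hpq⟩ := Reaches.onSweep ⟨k, hk⟩
    rw [List.take_length] at hpq
    rw [step_turnR, Option.map_eq_none_iff] at hhalt
    exact ⟨p, q, hp, hpq, hqF, hhalt⟩
  · rintro ⟨p, q, hp, hpq, hqF, hhalt⟩
    obtain ⟨k, hk⟩ := hp.reaches.sweepRight le_rfl (w.take_length.symm ▸ hpq)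
    exact ⟨k, q, hk, hqF, by rw [step_turnR, hhalt, Option.map_none]⟩

section Mono

variable {u v : List A}

theorem SweepStart.mono (hP : ∀ p q, runP M.nextP p u = some q → runP M.nextP p v = some q)
    (hM : ∀ r s, runP M.nextM r u.reverse = some s → runP M.nextM r v.reverse = some s)
    {c : Qp ⊕ Qm} (h : M.SweepStart u c) : M.SweepStart v c := by
  induction h with
  | init hp => exact .init hp
  | turnR _ hq hr ih => exact .turnR ih (hP _ _ hq) hr
  | turnL _ hs hp ih => exact .turnL ih (hM _ _ hs) hp

theorem AcceptsR.mono (hP : ∀ p q, runP M.nextP p u = some q → runP M.nextP p v = some q)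
    (hM : ∀ r s, runP M.nextM r u.reverse = some s → runP M.nextM r v.reverse = some s)
    {F : Set Qp} (h : M.AcceptsR F u) : M.AcceptsR F v := by
  rw [acceptsR_iff] at h ⊢
  obtain ⟨p, q, hp, hpq, hq⟩ := h
  exact ⟨p, q, hp.mono hP hM, hP p q hpq, hq⟩

end Mono

end SRFA

section CyclePath

variable {A : Type} {F P : Set ℕ} {p N : ℕ}

/-- The transition function of a cycle of length `p` next to a path on `N + 1` vertices, on which
the residue and the exact length of a word are counted. -/
def cyclePathNext (p N : ℕ) : ZMod p ⊕ Fin (N + 1) → Option (ZMod p ⊕ Fin (N + 1))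
  | Sum.inl i => some (Sum.inl (i + 1))
  | Sum.inr k => if h : (k : ℕ) + 1 < N + 1 then some (Sum.inr ⟨k + 1, h⟩) else none

theorem isPartialInjection_cyclePathNext : IsPartialInjection (cyclePathNext p N) := by
  rintro (i | k) (j | l) r hq hq' <;> simp only [cyclePathNext] at hq hq' <;> grind

theorem runP_cyclePathNext_inl_zero (w : List A) :
    runP (fun _ => cyclePathNext p N) (Sum.inl 0) w = some (Sum.inl (w.length : ZMod p)) := by
  induction w using List.reverseRecOn with
  | nil => simp [runP]
  | append_singleton w a ih => simp [runP_concat, ih, cyclePathNext]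

theorem runP_cyclePathNext_inr_zero (w : List A) :
    runP (fun _ => cyclePathNext p N) (Sum.inr 0) w =
      if h : w.length < N + 1 then some (Sum.inr ⟨w.length, h⟩) else none := by
  induction w using List.reverseRecOn with
  | nil => rfl
  | append_singleton w a ih =>
    rw [runP_concat, ih]
    split_ifs <;> grind [cyclePathNext]

/-- The states of the cycle and the path that accept words with length in `P` and in `F`,
respectively. -/
def cyclePathAccept (F P : Set ℕ) (p N : ℕ) : Set (ZMod p ⊕ Fin (N + 1)) :=
  {q | Sum.elim (fun i : ZMod p => i.val ∈ P) (fun k : Fin (N + 1) => k.val ∈ F) q}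

/-- The automaton that starts on the cycle and on the path at once and recognizes the words with
length in `F ∪ P`, provided that `F` is bounded by `N` and `P` has period `p`. -/
def cyclePathMRFA (A : Type) (F P : Set ℕ) (p N : ℕ) : MRFA A (ZMod p ⊕ Fin (N + 1)) where
  init := {Sum.inl 0, Sum.inr 0}
  next _ := cyclePathNext p N
  inj _ := isPartialInjection_cyclePathNext
  accept := cyclePathAccept F P p N

theorem mem_language_cyclePathMRFA_iff (hF : ∀ n ∈ F, n ≤ N) (hP : Function.Periodic (· ∈ P) p)
    (w : List A) : w ∈ (cyclePathMRFA A F P p N).Language ↔ w.length ∈ F ∪ P := by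
  have hcycle : (∃ q ∈ cyclePathAccept F P p N,
      runP (fun _ => cyclePathNext p N) (Sum.inl 0) w = some q) ↔ w.length ∈ P := by
    have hmod : w.length % p ∈ P ↔ w.length ∈ P := iff_of_eq (hP.map_mod_nat _)
    simp [runP_cyclePathNext_inl_zero, cyclePathAccept, hmod]
  have hpath : (∃ q ∈ cyclePathAccept F P p N,
      runP (fun _ => cyclePathNext p N) (Sum.inr 0) w = some q) ↔ w.length ∈ F := by
    have hlt : w.length ∈ F → w.length < N + 1 := fun h => Nat.lt_succ_of_le (hF _ h)
    rw [runP_cyclePathNext_inr_zero]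
    split_ifs with h
    · simp [cyclePathAccept]
    · simpa using mt hlt h
  simp only [MRFA.Language, cyclePathMRFA, Set.mem_ofPred_eq, Set.mem_insert_iff,
    Set.mem_singleton_iff, exists_eq_or_imp, exists_eq_left, hcycle, hpath]
  exact or_comm

theorem IsFiniteUnionPeriodic.exists_cyclePathMRFA_language_eq {S : Set ℕ}
    (hS : IsFiniteUnionPeriodic S) (A : Type) :
    ∃ (F P : Set ℕ) (p N : ℕ), NeZero p ∧
      (cyclePathMRFA A F P p N).Language = List.length ⁻¹' S := by
  obtain ⟨F, P, p, hF, hp, hP, rfl⟩ := hS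
  obtain ⟨N, hN⟩ := hF.bddAbove
  exact ⟨F, P, p, N, ⟨hp.ne'⟩, Set.ext (mem_language_cyclePathMRFA_iff (fun _ h => hN h) hP)⟩

/-- The sweeping automaton that tests the residue of the length on the cycle and, if this fails,
rewinds the cycle to `0` in the leftward sweep and tests the length itself on the path. -/
noncomputable def cyclePathSRFA (A : Type) (P : Set ℕ) (p N : ℕ) :
    SRFA A (ZMod p ⊕ Fin (N + 1)) (ZMod p) where
  start := Sum.inl 0
  nextP _ := cyclePathNext p N
  nextM _ i := some (i - 1)
  startT := some (Sum.inl 0)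
  turnL i := if i = 0 then some (Sum.inr 0) else none
  turnR := Sum.elim (fun i => if i.val ∈ P then none else some i) fun _ => none
  injP _ := isPartialInjection_cyclePathNext
  injM _ i j r hi hj := sub_left_injective (Option.some.inj (hi.trans hj.symm))
  injL i j r hi hj := by grind
  injR q q' r hq hq' := by grind
  startT_ne_turnL i r h := by grind

namespace cyclePathSRFA

theorem runP_nextM (w : List A) (i : ZMod p) :
    runP (cyclePathSRFA A P p N).nextM i w = some (i - w.length) := by
  induction w using List.reverseRecOn with
  | nil => simp [runP]
  | append_singleton w a ih =>
    rw [runP_concat, ih]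
    simp [cyclePathSRFA, sub_sub]

theorem eq_zero_of_sweepStart {w : List A} {q : ZMod p ⊕ Fin (N + 1)}
    (h : (cyclePathSRFA A P p N).SweepStart w (Sum.inl q)) : q = Sum.inl 0 ∨ q = Sum.inr 0 := by
  cases h with
  | init h => exact Or.inl (Option.some.inj h).symm
  | turnL _ _ h => grind [cyclePathSRFA]

theorem sweepStart_inr_zero {w : List A} (hw : (w.length : ZMod p).val ∉ P) :
    (cyclePathSRFA A P p N).SweepStart w (Sum.inl (Sum.inr 0)) := by
  have hcycle : (cyclePathSRFA A P p N).SweepStart w (Sum.inl (Sum.inl 0)) := .init rfl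
  have hrewind : (cyclePathSRFA A P p N).SweepStart w (Sum.inr (w.length : ZMod p)) :=
    hcycle.turnR (runP_cyclePathNext_inl_zero w) (by simpa [cyclePathSRFA] using hw)
  exact hrewind.turnL (runP_nextM w.reverse _) (by simp [cyclePathSRFA])

theorem turnR_eq_none {q : ZMod p ⊕ Fin (N + 1)} (hq : q ∈ cyclePathAccept F P p N) :
    (cyclePathSRFA A P p N).turnR q = none := by
  rcases q with i | k
  · exact if_pos hq
  · rfl

theorem langR_eq (F : Set ℕ) :
    (cyclePathSRFA A P p N).LangR (cyclePathAccept F P p N) =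
      (cyclePathMRFA A F P p N).Language := by
  ext w
  rw [SRFA.LangR, Set.mem_ofPred_eq, SRFA.acceptsR_iff]
  constructor
  · rintro ⟨q, r, hq, hqr, hr, -⟩
    exact ⟨q, eq_zero_of_sweepStart hq, r, hr, hqr⟩
  · rintro ⟨_, rfl | rfl, r, hr, hqr⟩
    · exact ⟨_, r, .init rfl, hqr, hr, turnR_eq_none hr⟩
    · by_cases hw : (w.length : ZMod p).val ∈ P
      · exact ⟨_, _, .init rfl, runP_cyclePathNext_inl_zero w, hw, turnR_eq_none (F := F) hw⟩
      · exact ⟨_, r, sweepStart_inr_zero hw, hqr, hr, turnR_eq_none hr⟩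

end cyclePathSRFA

end CyclePath

section Unary

variable {A : Type} [Unique A] {L : Set (List A)}

theorem RecMRFA.isFiniteUnionPeriodic (h : RecMRFA A L) :
    IsFiniteUnionPeriodic (List.length '' L) := by
  obtain ⟨Q, _, M, rfl⟩ := h
  refine isFiniteUnionPeriodic_image_length (Fintype.card Q)
    (Fintype.card Q).factorial_pos ?_
  rintro u ⟨q, hq, r, hr, hqr⟩ hu v huv
  exact ⟨q, hq, r, hr, runP_eq_some_of_length_modEq M.inj le_rfl hu huv hqr⟩

theorem RecSRFA.isFiniteUnionPeriodic (h : RecSRFA A L) :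
    IsFiniteUnionPeriodic (List.length '' L) := by
  obtain ⟨Qp, Qm, _, _, M, F, rfl⟩ := h
  refine isFiniteUnionPeriodic_image_length (Fintype.card Qp + Fintype.card Qm)
    (Fintype.card Qp + Fintype.card Qm).factorial_pos fun u hu hN v huv => hu.mono ?_ ?_
  · exact fun p q => runP_eq_some_of_length_modEq M.injP (Nat.le_add_right _ _) hN huv
  · refine fun r s => runP_eq_some_of_length_modEq M.injM (Nat.le_add_left _ _)
      (hN.trans_eq List.length_reverse.symm) ?_
    rwa [List.length_reverse, List.length_reverse]

theorem recMRFA_iff : RecMRFA A L ↔ IsFiniteUnionPeriodic (List.length '' L) := by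
  refine ⟨RecMRFA.isFiniteUnionPeriodic, fun h => ?_⟩
  obtain ⟨F, P, p, N, _, hL⟩ := h.exists_cyclePathMRFA_language_eq A
  rw [Set.preimage_image_eq L List.length_injective] at hL
  exact ⟨_, inferInstance, cyclePathMRFA A F P p N, hL⟩

theorem recSRFA_iff : RecSRFA A L ↔ IsFiniteUnionPeriodic (List.length '' L) := by
  refine ⟨RecSRFA.isFiniteUnionPeriodic, fun h => ?_⟩
  obtain ⟨F, P, p, N, _, hL⟩ := h.exists_cyclePathMRFA_language_eq A
  rw [Set.preimage_image_eq L List.length_injective, ← cyclePathSRFA.langR_eq] at hL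
  exact ⟨_, _, inferInstance, inferInstance, cyclePathSRFA A P p N, _, hL⟩

end Unary

theorem stmt13_general {A : Type} [Unique A] (L : Set (List A)) : RecSRFA A L ↔ RecMRFA A L :=
  recSRFA_iff.trans recMRFA_iff.symm

/-- over a one-letter alphabet, sRFA and MRFA recognize exactly
the same languages. -/
theorem stmt13 (L : Set (List Unit)) : RecSRFA Unit L ↔ RecMRFA Unit L :=
  stmt13_general L
end
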